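/- Let A₁ and A₂ be complex Banach algebras and let φ : A₁ → A₂ be a retraction, i.e., a continuous algebra homomorphism for which there exists a continuous algebra homomorphism ψ : A₂ → A₁ with φ∘ψ equal to the identity on A₂. If A₁ is cyclically amenable, then A₂ is cyclically amenable. -/

import Mathlib

/-- `D : A → A*` (a continuous linear map into the dual) is a *derivation* when
`D(ab) = D(a)·b + a·D(b)`, where `A*` is an `A`-bimodule via `(F·a)(x) = F(ax)` and
`(a·F)(x) = F(xa)`; pairing against `x : A` gives the condition below. -/
def IsDerivation {A : Type*} [NonUnitalNormedRing A] [NormedSpace ℂ A]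
    (D : A →L[ℂ] (A →L[ℂ] ℂ)) : Prop :=
  ∀ a b x : A, D (a * b) x = D a (b * x) + D b (x * a)

/-- A map `D : A → A*` is *cyclic* when `⟨D(a), b⟩ + ⟨D(b), a⟩ = 0` for all `a, b`. -/
def IsCyclicMap {A : Type*} [NonUnitalNormedRing A] [NormedSpace ℂ A]
    (D : A →L[ℂ] (A →L[ℂ] ℂ)) : Prop :=
  ∀ a b : A, D a b + D b a = 0

/-- `D : A → A*` is *inner* if `D = ad_F` for some `F ∈ A*`, where
`ad_F(a) = F·a - a·F`, i.e. `⟨ad_F(a), x⟩ = F(ax) - F(xa)`. -/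
def IsInnerDerivation {A : Type*} [NonUnitalNormedRing A] [NormedSpace ℂ A]
    (D : A →L[ℂ] (A →L[ℂ] ℂ)) : Prop :=
  ∃ F : A →L[ℂ] ℂ, ∀ a x : A, D a x = F (a * x) - F (x * a)

/-- A Banach algebra `A` is *cyclically weakly amenable* if every continuous derivation
from `A` into `A*` is cyclic. -/
def CyclicallyWeaklyAmenable (A : Type*) [NonUnitalNormedRing A] [NormedSpace ℂ A] : Prop :=
  ∀ D : A →L[ℂ] (A →L[ℂ] ℂ), IsDerivation D → IsCyclicMap D

/-- A Banach algebra `A` is *weakly amenable* if every continuous derivation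
from `A` into `A*` is inner. -/
def WeaklyAmenable (A : Type*) [NonUnitalNormedRing A] [NormedSpace ℂ A] : Prop :=
  ∀ D : A →L[ℂ] (A →L[ℂ] ℂ), IsDerivation D → IsInnerDerivation D

/-- A Banach algebra `A` is *cyclically amenable* if every continuous cyclic derivation
from `A` into `A*` is inner. -/
def CyclicallyAmenable (A : Type*) [NonUnitalNormedRing A] [NormedSpace ℂ A] : Prop :=
  ∀ D : A →L[ℂ] (A →L[ℂ] ℂ), IsDerivation D → IsCyclicMap D → IsInnerDerivation D

section Pullback

variable {A B : Type*} [NonUnitalNormedRing A] [NormedSpace ℂ A]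
  [NonUnitalNormedRing B] [NormedSpace ℂ B] {D : B →L[ℂ] (B →L[ℂ] ℂ)}

theorem IsDerivation.bilinearComp (hD : IsDerivation D) {f : A →L[ℂ] B}
    (hf : ∀ a b : A, f (a * b) = f a * f b) : IsDerivation (D.bilinearComp f f) := by
  intro a b x
  simpa only [ContinuousLinearMap.bilinearComp_apply, hf] using hD (f a) (f b) (f x)

theorem IsCyclicMap.bilinearComp (hD : IsCyclicMap D) (f : A →L[ℂ] B) :
    IsCyclicMap (D.bilinearComp f f) :=
  fun a b => hD (f a) (f b)

theorem IsInnerDerivation.bilinearComp (hD : IsInnerDerivation D) {f : A →L[ℂ] B}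
    (hf : ∀ a b : A, f (a * b) = f a * f b) : IsInnerDerivation (D.bilinearComp f f) := by
  obtain ⟨F, hF⟩ := hD
  refine ⟨F.comp f, fun a x => ?_⟩
  simpa only [ContinuousLinearMap.bilinearComp_apply, ContinuousLinearMap.comp_apply, hf]
    using hF (f a) (f x)

end Pullback

theorem cyclicallyAmenable_of_retraction_general {A₁ A₂ : Type*}
    [NonUnitalNormedRing A₁] [NormedSpace ℂ A₁] [NonUnitalNormedRing A₂] [NormedSpace ℂ A₂]
    (φ : A₁ →L[ℂ] A₂) (hφmul : ∀ a b : A₁, φ (a * b) = φ a * φ b)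
    (ψ : A₂ →L[ℂ] A₁) (hψmul : ∀ a b : A₂, ψ (a * b) = ψ a * ψ b)
    (hφψ : ∀ a : A₂, φ (ψ a) = a)
    (h : CyclicallyAmenable A₁) :
    CyclicallyAmenable A₂ := by
  intro D hD hDcyc
  have hinner : IsInnerDerivation (D.bilinearComp φ φ) :=
    h _ (hD.bilinearComp hφmul) (hDcyc.bilinearComp φ)
  have hpullback : (D.bilinearComp φ φ).bilinearComp ψ ψ = D := by
    ext a x
    simp only [ContinuousLinearMap.bilinearComp_apply, hφψ]
  exact hpullback ▸ hinner.bilinearComp hψmul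

/-- If `φ : A₁ → A₂` is a retraction of complex Banach algebras (a continuous algebra
homomorphism admitting a continuous algebra homomorphism `ψ : A₂ → A₁` with
`φ ∘ ψ = id`), and `A₁` is cyclically amenable, then so is `A₂`. -/
theorem cyclicallyAmenable_of_retraction {A₁ A₂ : Type*}
    [NonUnitalNormedRing A₁] [NormedSpace ℂ A₁] [IsScalarTower ℂ A₁ A₁]
    [SMulCommClass ℂ A₁ A₁] [CompleteSpace A₁]
    [NonUnitalNormedRing A₂] [NormedSpace ℂ A₂] [IsScalarTower ℂ A₂ A₂]
    [SMulCommClass ℂ A₂ A₂] [CompleteSpace A₂]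
    (φ : A₁ →L[ℂ] A₂) (hφmul : ∀ a b : A₁, φ (a * b) = φ a * φ b)
    (ψ : A₂ →L[ℂ] A₁) (hψmul : ∀ a b : A₂, ψ (a * b) = ψ a * ψ b)
    (hφψ : ∀ a : A₂, φ (ψ a) = a)
    (h : CyclicallyAmenable A₁) :
    CyclicallyAmenable A₂ :=
  cyclicallyAmenable_of_retraction_general φ hφmul ψ hψmul hφψ h
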